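/- arXiv:2305.00505 — 6 statements merged into one kernel-verified Lean document; each statement's English description precedes it below -/
import Mathlib

section
/- Let V : ℝ → ℝ be differentiable and nonnegative on [0, ∞), and let k₁ > 0, k₂ > 0, δ > 0, 0 < γ < 1, β > 1, and 0 < θ < 1 be constants such that for all t ≥ 0, V'(t) ≤ -k₁·V(t)^γ - k₂·V(t)^β + δ. Set T* = 1/(k₁(1-θ)(1-γ)) + 1/(k₂(1-θ)(β-1)). Then for all t ≥ T*, V(t) ≤ min{(δ/(k₁θ))^(1/γ), (δ/(k₂θ))^(1/β)}. -/
/-!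
If `V' ≤ -c V ^ p` and `V > 0`, then `V ^ (1 - p) / (1 - p)` decreases at rate at least `c`. For
`p > 1` this brings `V` below the level `1` within time `1 / (c (p - 1))`, whatever its initial
value; for `p < 1` it brings `V` from the level `1` to `0` within time `1 / (c (1 - p))`. Hence no
positive function can satisfy `V' ≤ -(k V ^ γ + l V ^ β)` for as long as the sum of these two times.

Spending the fraction `θ` of the decay on absorbing `δ` leaves such an inequality, with `k` and `l`
scaled by `1 - θ`, wherever `V` lies above either residual level. A solution cannot leave the
sublevel set of such a level once it has entered, so if it is above at time `t`, it was above during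
all of `[0, t]`, and `t` is less than the settling time.
-/

section PowerDecay

variable {f f' : ℝ → ℝ} {a b c p : ℝ}

lemma rpow_one_sub_div_le_of_deriv_right_le (hp : p ≠ 1) (hab : a ≤ b)
    (hf : ContinuousOn f (Set.Icc a b))
    (hf' : ∀ x ∈ Set.Ico a b, HasDerivWithinAt f (f' x) (Set.Ici x) x)
    (hpos : ∀ x ∈ Set.Icc a b, 0 < f x)
    (hdecay : ∀ x ∈ Set.Ico a b, f' x ≤ -(c * f x ^ p)) :
    f b ^ (1 - p) / (1 - p) ≤ f a ^ (1 - p) / (1 - p) - c * (b - a) := by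
  have hp' : 1 - p ≠ 0 := sub_ne_zero.mpr hp.symm
  have hderiv : ∀ x ∈ Set.Ico a b, HasDerivWithinAt (fun y ↦ f y ^ (1 - p) / (1 - p))
      (f' x * f x ^ (-p)) (Set.Ici x) x := fun x hx ↦ by
    have hx' := hpos x (Set.Ico_subset_Icc_self hx)
    refine (((hf' x hx).rpow_const (Or.inl hx'.ne')).div_const (1 - p)).congr_deriv ?_
    rw [sub_sub_cancel_left]
    field_simp
  have hbound : ∀ x ∈ Set.Ico a b, f' x * f x ^ (-p) ≤ -c := fun x hx ↦ by
    have hx' := hpos x (Set.Ico_subset_Icc_self hx)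
    calc f' x * f x ^ (-p) ≤ -(c * f x ^ p) * f x ^ (-p) := by gcongr; exact hdecay x hx
      _ = -c * (f x ^ p * f x ^ (-p)) := by ring
      _ = -c := by rw [← Real.rpow_add hx', add_neg_cancel, Real.rpow_zero, mul_one]
  refine image_le_of_deriv_right_le_deriv_boundary
    (B := fun x ↦ f a ^ (1 - p) / (1 - p) - c * (x - a)) (B' := fun _ ↦ -c)
    ((hf.rpow_const fun x hx ↦ Or.inl (hpos x hx).ne').div_const _) hderiv
    (by simp) (by fun_prop) (fun x _ ↦ ?_) hbound (Set.right_mem_Icc.mpr hab)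
  simpa using
    ((((hasDerivAt_id x).sub_const a).const_mul c).const_sub _).hasDerivWithinAt

lemma mul_sub_lt_rpow_one_sub_right_of_deriv_right_le (hp : 1 < p) (hab : a ≤ b)
    (hf : ContinuousOn f (Set.Icc a b))
    (hf' : ∀ x ∈ Set.Ico a b, HasDerivWithinAt f (f' x) (Set.Ici x) x)
    (hpos : ∀ x ∈ Set.Icc a b, 0 < f x)
    (hdecay : ∀ x ∈ Set.Ico a b, f' x ≤ -(c * f x ^ p)) :
    c * (p - 1) * (b - a) < f b ^ (1 - p) := by
  have hle := rpow_one_sub_div_le_of_deriv_right_le hp.ne' hab hf hf' hpos hdecay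
  have hfa : 0 < f a ^ (1 - p) := Real.rpow_pos_of_pos (hpos a (Set.left_mem_Icc.mpr hab)) _
  rw [div_sub' (by linarith), div_le_div_right_of_neg (by linarith)] at hle
  linarith

lemma mul_sub_lt_rpow_one_sub_left_of_deriv_right_le (hp : p < 1) (hab : a ≤ b)
    (hf : ContinuousOn f (Set.Icc a b))
    (hf' : ∀ x ∈ Set.Ico a b, HasDerivWithinAt f (f' x) (Set.Ici x) x)
    (hpos : ∀ x ∈ Set.Icc a b, 0 < f x)
    (hdecay : ∀ x ∈ Set.Ico a b, f' x ≤ -(c * f x ^ p)) :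
    c * (1 - p) * (b - a) < f a ^ (1 - p) := by
  have hle := rpow_one_sub_div_le_of_deriv_right_le hp.ne hab hf hf' hpos hdecay
  have hfb : 0 < f b ^ (1 - p) := Real.rpow_pos_of_pos (hpos b (Set.right_mem_Icc.mpr hab)) _
  rw [div_sub' (by linarith), div_le_div_iff_of_pos_right (by linarith)] at hle
  linarith

end PowerDecay

section FixedTime

variable {f f' : ℝ → ℝ} {a b k l m γ β : ℝ}

lemma sub_lt_of_pos_of_deriv_right_le (hk : 0 < k) (hl : 0 < l) (hγ : γ < 1) (hβ : 1 < β)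
    (hf : ContinuousOn f (Set.Icc a b))
    (hf' : ∀ x ∈ Set.Ico a b, HasDerivWithinAt f (f' x) (Set.Ici x) x)
    (hpos : ∀ x ∈ Set.Icc a b, 0 < f x)
    (hdecay : ∀ x ∈ Set.Ico a b, f' x ≤ -(k * f x ^ γ + l * f x ^ β)) :
    b - a < 1 / (k * (1 - γ)) + 1 / (l * (β - 1)) := by
  have hkγ : 0 < k * (1 - γ) := mul_pos hk (sub_pos.mpr hγ)
  have hlβ : 0 < l * (β - 1) := mul_pos hl (sub_pos.mpr hβ)
  have hkγ_inv := one_div_pos.mpr hkγ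
  have hlβ_inv := one_div_pos.mpr hlβ
  by_contra! hlong
  set s := a + 1 / (l * (β - 1)) with hs
  have has : a ≤ s := by linarith
  have hsb : s ≤ b := by linarith
  have hdecay_γ : ∀ x ∈ Set.Ico a b, f' x ≤ -(k * f x ^ γ) := fun x hx ↦ by
    have hfx := hpos x (Set.Ico_subset_Icc_self hx)
    have hβ_nonneg : 0 ≤ l * f x ^ β := by positivity
    linarith [hdecay x hx]
  have hdecay_β : ∀ x ∈ Set.Ico a b, f' x ≤ -(l * f x ^ β) := fun x hx ↦ by
    have hfx := hpos x (Set.Ico_subset_Icc_self hx)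
    have hγ_nonneg : 0 ≤ k * f x ^ γ := by positivity
    linarith [hdecay x hx]
  have hfs : f s < 1 := by
    have hlt := mul_sub_lt_rpow_one_sub_right_of_deriv_right_le hβ has
      (hf.mono (Set.Icc_subset_Icc_right hsb)) (fun x hx ↦ hf' x ⟨hx.1, hx.2.trans_le hsb⟩)
      (fun x hx ↦ hpos x ⟨hx.1, hx.2.trans hsb⟩) fun x hx ↦ hdecay_β x ⟨hx.1, hx.2.trans_le hsb⟩
    rw [hs, add_sub_cancel_left, mul_one_div_cancel hlβ.ne', ← hs] at hlt
    exact lt_of_not_ge fun h ↦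
      hlt.not_ge (Real.rpow_le_one_of_one_le_of_nonpos h (sub_nonpos.mpr hβ.le))
  have hlt := mul_sub_lt_rpow_one_sub_left_of_deriv_right_le hγ hsb
    (hf.mono (Set.Icc_subset_Icc_left has)) (fun x hx ↦ hf' x ⟨has.trans hx.1, hx.2⟩)
    (fun x hx ↦ hpos x ⟨has.trans hx.1, hx.2⟩) fun x hx ↦ hdecay_γ x ⟨has.trans hx.1, hx.2⟩
  have hfs_rpow : f s ^ (1 - γ) < 1 := Real.rpow_lt_one (hpos s ⟨has, hsb⟩).le hfs (sub_pos.mpr hγ)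
  have hbs : b - s < 1 / (k * (1 - γ)) := (lt_div_iff₀' hkγ).mpr (hlt.trans hfs_rpow)
  linarith

lemma image_le_of_deriv_right_neg_of_eq (hab : a ≤ b) (hf : ContinuousOn f (Set.Icc a b))
    (hf' : ∀ x ∈ Set.Ico a b, HasDerivWithinAt f (f' x) (Set.Ici x) x)
    (hneg : ∀ x ∈ Set.Ico a b, f x = m → f' x < 0) (ha : f a ≤ m) : f b ≤ m :=
  image_le_of_deriv_right_lt_deriv_boundary (B := fun _ ↦ m) hf hf' ha
    (fun x ↦ hasDerivAt_const x m) hneg (Set.right_mem_Icc.mpr hab)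

lemma image_le_of_deriv_right_le_of_le_sub (hk : 0 < k) (hl : 0 < l) (hγ : γ < 1) (hβ : 1 < β)
    (hm : 0 < m) (hf : ContinuousOn f (Set.Icc a b))
    (hf' : ∀ x ∈ Set.Ico a b, HasDerivWithinAt f (f' x) (Set.Ici x) x)
    (hdecay : ∀ x ∈ Set.Ico a b, m ≤ f x → f' x ≤ -(k * f x ^ γ + l * f x ^ β))
    (hb : 1 / (k * (1 - γ)) + 1 / (l * (β - 1)) ≤ b - a) : f b ≤ m := by
  by_contra! hfb
  have habove : ∀ s ∈ Set.Icc a b, m < f s := by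
    intro s hs
    by_contra! hfs
    refine hfb.not_ge <| image_le_of_deriv_right_neg_of_eq hs.2
      (hf.mono (Set.Icc_subset_Icc_left hs.1)) (fun x hx ↦ hf' x ⟨hs.1.trans hx.1, hx.2⟩) ?_ hfs
    intro x hx hfx
    have hfx_pos : 0 < f x := hfx ▸ hm
    exact (hdecay x ⟨hs.1.trans hx.1, hx.2⟩ hfx.ge).trans_lt (neg_neg_of_pos (by positivity))
  exact hb.not_gt <| sub_lt_of_pos_of_deriv_right_le hk hl hγ hβ hf hf'
    (fun x hx ↦ hm.trans (habove x hx))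
    fun x hx ↦ hdecay x hx (habove x (Set.Ico_subset_Icc_self hx)).le

end FixedTime

lemma le_mul_rpow_of_div_rpow_one_div_le {δ κ p v : ℝ} (hδ : 0 ≤ δ) (hκ : 0 < κ) (hp : 0 < p)
    (hv : (δ / κ) ^ (1 / p) ≤ v) : δ ≤ κ * v ^ p := by
  have hbase : 0 ≤ δ / κ := by positivity
  have hv_nonneg : 0 ≤ v := (Real.rpow_nonneg hbase _).trans hv
  rw [one_div, Real.rpow_inv_le_iff_of_pos hbase hv_nonneg hp] at hv
  exact (div_le_iff₀' hκ).mp hv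

theorem stmt_0_general {V V' : ℝ → ℝ} {k₁ k₂ δ γ β θ : ℝ}
    (hk₁ : 0 < k₁) (hk₂ : 0 < k₂) (hδ : 0 < δ)
    (hγ₀ : 0 < γ) (hγ₁ : γ < 1) (hβ : 1 < β) (hθ₀ : 0 < θ) (hθ₁ : θ < 1)
    (hVcont : ContinuousOn V (Set.Ici 0))
    (hVderiv : ∀ t : ℝ, 0 ≤ t → HasDerivWithinAt V (V' t) (Set.Ici t) t)
    (hVineq : ∀ t : ℝ, 0 ≤ t → 0 < V t →
      V' t ≤ -k₁ * (V t) ^ γ - k₂ * (V t) ^ β + δ)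
    {t : ℝ} (ht : 1 / (k₁ * (1 - θ) * (1 - γ)) + 1 / (k₂ * (1 - θ) * (β - 1)) ≤ t) :
    V t ≤ min ((δ / (k₁ * θ)) ^ (1 / γ)) ((δ / (k₂ * θ)) ^ (1 / β)) := by
  have hθ' : 0 < 1 - θ := sub_pos.mpr hθ₁
  have le_of_absorbs : ∀ m, 0 < m →
      (∀ v, m ≤ v → δ ≤ k₁ * θ * v ^ γ + k₂ * θ * v ^ β) → V t ≤ m := by
    intro m hm habsorb
    refine image_le_of_deriv_right_le_of_le_sub (mul_pos hk₁ hθ') (mul_pos hk₂ hθ') hγ₁ hβ hm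
      (hVcont.mono Set.Icc_subset_Ici_self) (fun s hs ↦ hVderiv s hs.1) (fun s hs hms ↦ ?_)
      (ht.trans_eq (sub_zero t).symm)
    linarith [hVineq s hs.1 (hm.trans_le hms), habsorb (V s) hms]
  refine le_min (le_of_absorbs _ (by positivity) fun v hv ↦ ?_)
    (le_of_absorbs _ (by positivity) fun v hv ↦ ?_)
  all_goals have hv_nonneg : 0 ≤ v := le_trans (by positivity) hv
  · exact (le_mul_rpow_of_div_rpow_one_div_le hδ.le (by positivity) hγ₀ hv).trans
      (le_add_of_nonneg_right (by positivity))
  · exact (le_mul_rpow_of_div_rpow_one_div_le hδ.le (by positivity) (by linarith) hv).trans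
      (le_add_of_nonneg_left (by positivity))

/-- Practical fixed-time stability comparison lemma (Lemma 1):
if `V` is nonnegative and differentiable on `[0, ∞)` and satisfies
`V' ≤ -k₁ V^γ - k₂ V^β + δ` there, then after the explicit settling time
`T* = 1/(k₁(1-θ)(1-γ)) + 1/(k₂(1-θ)(β-1))` the value `V t` stays in the
explicit residual set. -/
theorem stmt_0 (V : ℝ → ℝ) (k₁ k₂ δ γ β θ : ℝ)
    (hk₁ : 0 < k₁) (hk₂ : 0 < k₂) (hδ : 0 < δ)
    (hγ₀ : 0 < γ) (hγ₁ : γ < 1) (hβ : 1 < β) (hθ₀ : 0 < θ) (hθ₁ : θ < 1)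
    (hVdiff : ∀ t : ℝ, 0 ≤ t → DifferentiableAt ℝ V t)
    (hVnonneg : ∀ t : ℝ, 0 ≤ t → 0 ≤ V t)
    (hVineq : ∀ t : ℝ, 0 ≤ t →
      deriv V t ≤ -k₁ * (V t) ^ γ - k₂ * (V t) ^ β + δ) :
    ∀ t : ℝ, 1 / (k₁ * (1 - θ) * (1 - γ)) + 1 / (k₂ * (1 - θ) * (β - 1)) ≤ t →
      V t ≤ min ((δ / (k₁ * θ)) ^ (1 / γ)) ((δ / (k₂ * θ)) ^ (1 / β)) := by
  exact fun _ ↦ stmt_0_general hk₁ hk₂ hδ hγ₀ hγ₁ hβ hθ₀ hθ₁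
    (fun t ht ↦ (hVdiff t ht).continuousAt.continuousWithinAt)
    (fun t ht ↦ (hVdiff t ht).hasDerivAt.hasDerivWithinAt) fun t ht _ ↦ hVineq t ht
end

section
/- Let h₁ > 0 and h₂ > 0 and let ξ be the nonlinear transformation function. For all x, y with -h₁ < x < h₂ and -h₁ < y < h₂, one has |x - y| ≤ |ξ(x) - ξ(y)|. -/
/-!
By the mean value theorem, a function whose derivative is at least `1` on an interval does not
shrink distances there. The derivative of `ξ` at `z` is `(h₁ + h₂)² / (4 (h₁ + z) (h₂ - z))`, and
this is at least `1` by AM-GM applied to `h₁ + z` and `h₂ - z`, whose sum is `h₁ + h₂`.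
-/

open Set

theorem mul_abs_sub_le_abs_image_sub_of_le_deriv {D : Set ℝ} (hD : Convex ℝ D) {f : ℝ → ℝ}
    (hf : ContinuousOn f D) (hf' : DifferentiableOn ℝ f (interior D)) {C : ℝ}
    (hC : ∀ z ∈ interior D, C ≤ deriv f z) {x y : ℝ} (hx : x ∈ D) (hy : y ∈ D) :
    C * |x - y| ≤ |f x - f y| := by
  wlog hyx : y ≤ x generalizing x y
  · rw [abs_sub_comm x, abs_sub_comm (f x)]
    exact this hy hx (le_of_not_ge hyx)
  calc C * |x - y| = C * (x - y) := by rw [abs_of_nonneg (sub_nonneg.2 hyx)]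
    _ ≤ f x - f y := hD.mul_sub_le_image_sub_of_le_deriv hf hf' hC y hy x hx hyx
    _ ≤ |f x - f y| := le_abs_self _

/-- The nonlinear transformation function `ξ`, which stretches the interval `(-h₁, h₂)` of admissible
values onto the real line. It is meant for `z` in this interval: elsewhere `Real.log t = log |t|`
and `t / 0 = 0` give it junk values. -/
noncomputable def scaledLogit (h₁ h₂ z : ℝ) : ℝ :=
  (h₁ + h₂) / 4 * Real.log ((h₁ + z) / (h₂ - z))

section scaledLogit

variable {h₁ h₂ z : ℝ}

theorem hasDerivAt_scaledLogit (h₁z : h₁ + z ≠ 0) (h₂z : h₂ - z ≠ 0) :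
    HasDerivAt (scaledLogit h₁ h₂) ((h₁ + h₂) ^ 2 / (4 * (h₁ + z) * (h₂ - z))) z := by
  have hquot : HasDerivAt (fun t ↦ (h₁ + t) / (h₂ - t))
      ((1 * (h₂ - z) - (h₁ + z) * (-1)) / (h₂ - z) ^ 2) z :=
    ((hasDerivAt_id z).const_add h₁).div ((hasDerivAt_id z).const_sub h₂) h₂z
  refine ((hquot.log (div_ne_zero h₁z h₂z)).const_mul ((h₁ + h₂) / 4)).congr_deriv ?_
  field_simp
  ring

theorem one_le_deriv_scaledLogit (hz : z ∈ Ioo (-h₁) h₂) : 1 ≤ deriv (scaledLogit h₁ h₂) z := by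
  have h₁z : 0 < h₁ + z := neg_lt_iff_pos_add'.1 hz.1
  have h₂z : 0 < h₂ - z := sub_pos.2 hz.2
  rw [(hasDerivAt_scaledLogit h₁z.ne' h₂z.ne').deriv, one_le_div (by positivity)]
  calc 4 * (h₁ + z) * (h₂ - z) ≤ ((h₁ + z) + (h₂ - z)) ^ 2 := four_mul_le_sq_add _ _
    _ = (h₁ + h₂) ^ 2 := by ring

theorem differentiableOn_scaledLogit : DifferentiableOn ℝ (scaledLogit h₁ h₂) (Ioo (-h₁) h₂) :=
  fun _ hz ↦ (hasDerivAt_scaledLogit (neg_lt_iff_pos_add'.1 hz.1).ne'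
    (sub_pos.2 hz.2).ne').differentiableAt.differentiableWithinAt

theorem stmt_9_general {x y : ℝ} (hx : x ∈ Ioo (-h₁) h₂) (hy : y ∈ Ioo (-h₁) h₂) :
    |x - y| ≤ |scaledLogit h₁ h₂ x - scaledLogit h₁ h₂ y| := by
  have hdiff := differentiableOn_scaledLogit (h₁ := h₁) (h₂ := h₂)
  simpa only [one_mul] using mul_abs_sub_le_abs_image_sub_of_le_deriv (convex_Ioo (-h₁) h₂)
    hdiff.continuousOn (hdiff.mono interior_subset)
    (fun _ hz ↦ one_le_deriv_scaledLogit (interior_subset hz)) hx hy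

end scaledLogit

/-- Key estimate of Appendix B: the nonlinear transformation function
`ξ` expands distances, i.e. `|x - y| ≤ |ξ(x) - ξ(y)|` on `(-h₁, h₂)`. -/
theorem stmt_9 (h₁ h₂ : ℝ) (hh₁ : 0 < h₁) (hh₂ : 0 < h₂)
    (ξ : ℝ → ℝ)
    (hξ : ∀ z ∈ Set.Ioo (-h₁) h₂,
      ξ z = ((h₁ + h₂) / 4) * Real.log ((h₁ + z) / (h₂ - z)))
    (x y : ℝ) (hx : x ∈ Set.Ioo (-h₁) h₂) (hy : y ∈ Set.Ioo (-h₁) h₂) :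
    |x - y| ≤ |ξ x - ξ y| := by
  rw [hξ x hx, hξ y hy]
  exact stmt_9_general hx hy
end

section
/- For all real numbers a ≥ 0, â ≥ 0 and r > 0, one has â^r · (a - â) ≤ (2/(1+r)) · a^(1+r) - (1/(1+r)) · |a - â|^(1+r), where all powers are real powers of nonnegative bases. -/
/-!
Put `p = 1 + r`. The graph of the convex function `x ↦ x ^ p` lies above its tangent at `â`, so
`p â ^ r (a - â) ≤ a ^ p - â ^ p`. Since `|a - â| ≤ max a â`, also `|a - â| ^ p ≤ a ^ p + â ^ p`,
which trades `-â ^ p` for `a ^ p - |a - â| ^ p`. Dividing by `p` gives the claim.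
-/

lemma mul_sub_le_sub_of_convexOn_of_hasDerivWithinAt {s : Set ℝ} {f : ℝ → ℝ} {f' x y : ℝ}
    (hf : ConvexOn ℝ s f) (hx : x ∈ s) (hy : y ∈ s) (hf' : HasDerivWithinAt f f' s y) :
    f' * (x - y) ≤ f x - f y := by
  rcases lt_trichotomy x y with hxy | rfl | hyx
  · have hslope : slope f x y ≤ f' := hf.slope_le_of_hasDerivWithinAt hx hy hxy hf'
    rw [slope_def_field, div_le_iff₀ (sub_pos.mpr hxy)] at hslope
    linarith
  · simp
  · have hslope : f' ≤ slope f y x := hf.le_slope_of_hasDerivWithinAt hy hx hyx hf'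
    rwa [slope_def_field, le_div_iff₀ (sub_pos.mpr hyx)] at hslope

section RealPowers

variable {p x y : ℝ}

lemma mul_rpow_sub_one_mul_sub_le_rpow_sub_rpow (hp : 1 ≤ p) (hx : 0 ≤ x) (hy : 0 ≤ y) :
    p * y ^ (p - 1) * (x - y) ≤ x ^ p - y ^ p :=
  mul_sub_le_sub_of_convexOn_of_hasDerivWithinAt (convexOn_rpow hp) hx hy
    (Real.hasDerivAt_rpow_const (Or.inr hp)).hasDerivWithinAt

lemma abs_sub_rpow_le_rpow_add_rpow (hp : 0 ≤ p) (hx : 0 ≤ x) (hy : 0 ≤ y) :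
    |x - y| ^ p ≤ x ^ p + y ^ p :=
  calc |x - y| ^ p ≤ max x y ^ p :=
        Real.rpow_le_rpow (abs_nonneg _)
          (abs_sub_le_of_nonneg_of_le hx (le_max_left x y) hy (le_max_right x y)) hp
    _ = max (x ^ p) (y ^ p) := Real.rpow_max hx hy hp
    _ ≤ x ^ p + y ^ p := max_le_add_of_nonneg (Real.rpow_nonneg hx p) (Real.rpow_nonneg hy p)

end RealPowers

/-- Combined adaptive-parameter estimate (inequalities (22), (36), (37)):
for `a, â ≥ 0` and `r > 0`,
`â^r (a - â) ≤ (2/(1+r)) a^(1+r) - (1/(1+r)) |a - â|^(1+r)`. -/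
theorem stmt_12 (a ahat r : ℝ) (ha : 0 ≤ a) (hahat : 0 ≤ ahat) (hr : 0 < r) :
    ahat ^ r * (a - ahat) ≤
      (2 / (1 + r)) * a ^ (1 + r) - (1 / (1 + r)) * |a - ahat| ^ (1 + r) := by
  have hp : 0 < 1 + r := by positivity
  have tangent : (1 + r) * ahat ^ r * (a - ahat) ≤ a ^ (1 + r) - ahat ^ (1 + r) := by
    simpa only [add_sub_cancel_left] using
      mul_rpow_sub_one_mul_sub_le_rpow_sub_rpow (le_add_of_nonneg_right hr.le) ha hahat
  have error_bound : |a - ahat| ^ (1 + r) ≤ a ^ (1 + r) + ahat ^ (1 + r) :=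
    abs_sub_rpow_le_rpow_add_rpow hp.le ha hahat
  calc ahat ^ r * (a - ahat)
      ≤ (2 * a ^ (1 + r) - |a - ahat| ^ (1 + r)) / (1 + r) := by
        rw [le_div_iff₀ hp]
        linarith
    _ = (2 / (1 + r)) * a ^ (1 + r) - (1 / (1 + r)) * |a - ahat| ^ (1 + r) := by ring
end

section
/- Let 0 < r₁ < 1 < r₂ and 0 < λ < 2. Then for all real numbers y and ν: y²/4 + y·( -(1/λ)·(s_{r₁}(y) + s_{r₂}(y) + y) - ν ) ≤ -(1/λ)·|y|^(1+r₁) - (1/λ)·|y|^(1+r₂) + ν², where s_r(y) = Real.sign y · |y|^r is the signed power and all powers of nonnegative numbers are Real.rpow. -/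
/-- The signed power `s_r(y) = sign(y) · |y|^r`. -/
noncomputable def signedPow (r y : ℝ) : ℝ := Real.sign y * |y| ^ r

/-!
Multiplying by `y` turns each signed power `s_r(y)` into `|y| ^ (1 + r)`, so the power terms on the
two sides cancel. What remains is `y² / 4 - y² / λ - y ν ≤ ν²`: Young's inequality bounds `-y ν` by
`y² / 4 + ν²`, and the resulting `y² / 2` is absorbed by `y² / λ` as soon as `λ ≤ 2`.
-/

theorem self_mul_realSign (x : ℝ) : x * Real.sign x = |x| := by
  rcases lt_trichotomy x 0 with hneg | rfl | hpos
  · rw [Real.sign_of_neg hneg, abs_of_neg hneg, mul_neg_one]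
  · rw [zero_mul, abs_zero]
  · rw [Real.sign_of_pos hpos, abs_of_pos hpos, mul_one]

theorem self_mul_signedPow {r : ℝ} (hr : 1 + r ≠ 0) (y : ℝ) :
    y * signedPow r y = |y| ^ (1 + r) := by
  rw [signedPow, ← mul_assoc, self_mul_realSign, Real.rpow_one_add' (abs_nonneg y) hr]

theorem neg_mul_le_sq_div_four_add_sq {K : Type*} [Field K] [LinearOrder K]
    [IsStrictOrderedRing K] (a b : K) : -(a * b) ≤ a ^ 2 / 4 + b ^ 2 := by
  have square_nonneg : 0 ≤ (a / 2 + b) ^ 2 := sq_nonneg _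
  linear_combination square_nonneg

theorem stmt_13_general {r₁ r₂ lam : ℝ} (hr₁ : -1 < r₁) (hr₂ : -1 < r₂) (hlam₀ : 0 < lam)
    (hlam₂ : lam ≤ 2) (y ν : ℝ) :
    y ^ 2 / 4 +
      y * (-(1 / lam) * (signedPow r₁ y + signedPow r₂ y + y) - ν) ≤
    -(1 / lam) * |y| ^ (1 + r₁) - (1 / lam) * |y| ^ (1 + r₂) + ν ^ 2 := by
  have young : -(y * ν) ≤ y ^ 2 / 4 + ν ^ 2 := neg_mul_le_sq_div_four_add_sq y ν
  have absorb : 1 / 2 * y ^ 2 ≤ 1 / lam * y ^ 2 := by gcongr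
  calc
    _ = -(1 / lam) * (y * signedPow r₁ y) - 1 / lam * (y * signedPow r₂ y)
          + (y ^ 2 / 4 - 1 / lam * y ^ 2 - y * ν) := by ring
    _ = -(1 / lam) * |y| ^ (1 + r₁) - 1 / lam * |y| ^ (1 + r₂)
          + (y ^ 2 / 4 - 1 / lam * y ^ 2 - y * ν) := by
      rw [self_mul_signedPow (by linarith), self_mul_signedPow (by linarith)]
    _ ≤ -(1 / lam) * |y| ^ (1 + r₁) - 1 / lam * |y| ^ (1 + r₂) + ν ^ 2 := by
      gcongr
      linarith

/-- Inequality (23)/(38): the filter-error bound for the fixed-time dynamic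
surface control law.  For `0 < r₁ < 1 < r₂` and `0 < λ < 2`,
`y²/4 + y(-(1/λ)(s_{r₁}(y) + s_{r₂}(y) + y) - ν)
  ≤ -(1/λ)|y|^(1+r₁) - (1/λ)|y|^(1+r₂) + ν²`. -/
theorem stmt_13 (r₁ r₂ lam : ℝ) (hr₁₀ : 0 < r₁) (hr₁₁ : r₁ < 1)
    (hr₂ : 1 < r₂) (hlam₀ : 0 < lam) (hlam₂ : lam < 2) (y ν : ℝ) :
    y ^ 2 / 4 +
      y * (-(1 / lam) * (signedPow r₁ y + signedPow r₂ y + y) - ν) ≤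
    -(1 / lam) * |y| ^ (1 + r₁) - (1 / lam) * |y| ^ (1 + r₂) + ν ^ 2 :=
  stmt_13_general (by linarith) (by linarith) hlam₀ hlam₂.le y ν
end

section
/- Let σ₁ ≥ 0, σ₂ ≥ 0, r₁ > 0, r₂ > 0, let g : ℝ → ℝ be continuous with g(t) ≥ 0 for all t ≥ 0, and let â : ℝ → ℝ be differentiable on [0, ∞) with â'(t) = g(t) - σ₁·s_{r₁}(â(t)) - σ₂·s_{r₂}(â(t)) for all t ≥ 0, where s_r(y) = Real.sign y · |y|^r. If â(0) ≥ 0, then â(t) ≥ 0 for all t ≥ 0. -/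
open Set

/-! At a time when the estimate is negative, both leakage terms `-σᵢ s_{rᵢ}(â)` are nonnegative, so
`â' ≥ 0` there. Hence `â` can never decrease below `0`: a function is kept on one side of a barrier
as soon as the derivative inequality holds beyond the barrier. -/

theorem image_le_of_deriv_right_le_deriv_of_boundary_lt {f f' B B' : ℝ → ℝ} {a b : ℝ}
    (hf : ContinuousOn f (Icc a b))
    (hf' : ∀ x ∈ Ico a b, HasDerivWithinAt f (f' x) (Ici x) x)
    (ha : f a ≤ B a) (hB : ContinuousOn B (Icc a b))
    (hB' : ∀ x ∈ Ico a b, HasDerivWithinAt B (B' x) (Ici x) x)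
    (bound : ∀ x ∈ Ico a b, B x < f x → f' x ≤ B' x) :
    ∀ x ∈ Icc a b, f x ≤ B x := by
  -- The `+ 1` keeps the perturbed barrier strictly above `B` already at `x = a`, so that a point
  -- where `f` meets it satisfies `B x < f x`; its extra slope `ε` makes the bound there strict.
  have le_perturbed : ∀ ε > 0, ∀ x ∈ Icc a b, f x ≤ B x + ε * (x - a + 1) := by
    intro ε hε
    have hgap : ∀ x, a ≤ x → 0 < ε * (x - a + 1) := fun x hx => mul_pos hε (by linarith)
    have hslope : ∀ x, HasDerivAt (fun y => ε * (y - a + 1)) ε x := fun x => by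
      simpa using (((hasDerivAt_id x).sub_const a).add_const 1).const_mul ε
    refine image_le_of_deriv_right_lt_deriv_boundary' hf hf' ?start (hB.add (by fun_prop))
      (fun x hx => (hB' x hx).add (hslope x).hasDerivWithinAt) ?strict
    case start => exact ha.trans (le_add_of_nonneg_right (hgap a le_rfl).le)
    case strict =>
      intro x hx hmeet
      have hbeyond : B x < f x := hmeet ▸ lt_add_of_pos_right _ (hgap x hx.1)
      exact lt_add_of_le_of_pos (bound x hx hbeyond) hε
  intro x hx
  refine le_of_forall_pos_le_add fun δ hδ => ?_
  have hpos : 0 < x - a + 1 := by linarith [hx.1]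
  simpa only [div_mul_cancel₀ δ hpos.ne'] using
    le_perturbed (δ / (x - a + 1)) (div_pos hδ hpos) x hx

theorem signedPow_nonpos (r : ℝ) {y : ℝ} (hy : y ≤ 0) : signedPow r y ≤ 0 := by
  have hsign : Real.sign y ≤ 0 := by
    rcases hy.lt_or_eq with hneg | rfl
    · simp [Real.sign_of_neg hneg]
    · exact Real.sign_zero.le
  exact mul_nonpos_of_nonpos_of_nonneg hsign (Real.rpow_nonneg (abs_nonneg y) r)

theorem stmt_14_general {σ₁ σ₂ r₁ r₂ : ℝ} (hσ₁ : 0 ≤ σ₁) (hσ₂ : 0 ≤ σ₂)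
    {g : ℝ → ℝ} (hgpos : ∀ t, 0 ≤ t → 0 ≤ g t) {ahat : ℝ → ℝ}
    (hode : ∀ t, 0 ≤ t →
      HasDerivWithinAt ahat
        (g t - σ₁ * signedPow r₁ (ahat t) - σ₂ * signedPow r₂ (ahat t)) (Ici 0) t)
    (h0 : 0 ≤ ahat 0) :
    ∀ t, 0 ≤ t → 0 ≤ ahat t := by
  intro t ht
  have hcont : ContinuousOn ahat (Icc 0 t) := fun x hx =>
    (hode x hx.1).continuousWithinAt.mono Icc_subset_Ici_self
  refine image_le_of_deriv_right_le_deriv_of_boundary_lt continuousOn_const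
    (fun x _ => hasDerivWithinAt_const x _ 0) h0 hcont
    (fun x hx => (hode x hx.1).mono (Ici_subset_Ici.2 hx.1)) ?_ t (right_mem_Icc.2 ht)
  intro x hx hneg
  have hleak₁ := mul_nonpos_of_nonneg_of_nonpos hσ₁ (signedPow_nonpos r₁ hneg.le)
  have hleak₂ := mul_nonpos_of_nonneg_of_nonpos hσ₂ (signedPow_nonpos r₂ hneg.le)
  linarith [hgpos x hx.1]

/-- The adaptive laws (17), (31), (42) keep the parameter estimate
nonnegative: if `â' = g - σ₁ s_{r₁}(â) - σ₂ s_{r₂}(â)` on `[0, ∞)` with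
continuous `g ≥ 0` and `â(0) ≥ 0`, then `â(t) ≥ 0` for all `t ≥ 0`. -/
theorem stmt_14 (σ₁ σ₂ r₁ r₂ : ℝ) (hσ₁ : 0 ≤ σ₁) (hσ₂ : 0 ≤ σ₂)
    (hr₁ : 0 < r₁) (hr₂ : 0 < r₂)
    (g : ℝ → ℝ) (hg : Continuous g) (hgpos : ∀ t : ℝ, 0 ≤ t → 0 ≤ g t)
    (ahat : ℝ → ℝ)
    (hode : ∀ t : ℝ, 0 ≤ t →
      HasDerivAt ahat
        (g t - σ₁ * signedPow r₁ (ahat t) - σ₂ * signedPow r₂ (ahat t)) t)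
    (h0 : 0 ≤ ahat 0) :
    ∀ t : ℝ, 0 ≤ t → 0 ≤ ahat t :=
  stmt_14_general hσ₁ hσ₂ hgpos (fun t ht => (hode t ht).hasDerivWithinAt) h0
end

section
/- Let h₁, h₂ : ℝ → ℝ be continuous with h₁(t) > 0 and h₂(t) > 0 for all t ≥ 0, let x : ℝ → ℝ be continuous, and let M > 0. Suppose -h₁(0) < x(0) < h₂(0), and suppose that for every t ≥ 0 at which -h₁(t) < x(t) < h₂(t) one has |((h₁(t) + h₂(t))/4) · Real.log((h₁(t) + x(t))/(h₂(t) - x(t)))| ≤ M. Then -h₁(t) < x(t) < h₂(t) for all t ≥ 0. -/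
/-!
If the trajectory approached an endpoint of the constraint interval, one of the gaps
`h₁ + x`, `h₂ - x` would tend to `0` and the other to the positive width `h₁ + h₂`, so the
transformed variable would be unbounded. Hence the set of times at which the constraint holds is
closed as well as open, and by connectedness of the time axis it is everything.
-/

open Filter Set Topology

/-- The logarithmic transformation `ξ` of the interval `(-a, b)` onto `ℝ`, with the endpoints as
arguments so that they may vary along a trajectory. It is meaningful only for `-a < y < b`. -/
noncomputable def logBarrier (a b y : ℝ) : ℝ :=
  (a + b) / 4 * Real.log ((a + y) / (b - y))

lemma logBarrier_swap_neg (a b y : ℝ) : logBarrier b a (-y) = -logBarrier a b y := by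
  rw [logBarrier, logBarrier, ← mul_neg, ← Real.log_inv, inv_div, add_comm b a, sub_neg_eq_add,
    ← sub_eq_add_neg]

section BlowUp

variable {α : Type*} {l : Filter α} {h₁ h₂ x : α → ℝ} {a b : ℝ}

lemma tendsto_logBarrier_atTop (hab : 0 < a + b) (hh₁ : Tendsto h₁ l (𝓝 a))
    (hh₂ : Tendsto h₂ l (𝓝 b)) (hx : Tendsto x l (𝓝 b)) (hlt : ∀ᶠ t in l, x t < h₂ t) :
    Tendsto (fun t ↦ logBarrier (h₁ t) (h₂ t) (x t)) l atTop := by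
  have hgap : Tendsto (fun t ↦ h₂ t - x t) l (𝓝[>] 0) :=
    tendsto_nhdsWithin_iff.2
      ⟨by simpa only [sub_self] using hh₂.sub hx, hlt.mono fun _ ↦ sub_pos.2⟩
  have hratio : Tendsto (fun t ↦ (h₁ t + x t) / (h₂ t - x t)) l atTop :=
    (hh₁.add hx).pos_mul_atTop hab hgap.inv_tendsto_nhdsGT_zero
  exact ((hh₁.add hh₂).div_const 4).pos_mul_atTop (by positivity)
    (Real.tendsto_log_atTop.comp hratio)

lemma tendsto_logBarrier_atBot (hab : 0 < a + b) (hh₁ : Tendsto h₁ l (𝓝 a))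
    (hh₂ : Tendsto h₂ l (𝓝 b)) (hx : Tendsto x l (𝓝 (-a))) (hlt : ∀ᶠ t in l, -h₁ t < x t) :
    Tendsto (fun t ↦ logBarrier (h₁ t) (h₂ t) (x t)) l atBot := by
  have hneg : Tendsto (fun t ↦ logBarrier (h₂ t) (h₁ t) (-x t)) l atTop :=
    tendsto_logBarrier_atTop (add_comm a b ▸ hab) hh₂ hh₁ (neg_neg a ▸ hx.neg)
      (hlt.mono fun _ ↦ neg_lt.1)
  simpa only [logBarrier_swap_neg, tendsto_neg_atTop_iff] using hneg

end BlowUp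

section Invariance

variable {T : Type*} [TopologicalSpace T] {h₁ h₂ x M : T → ℝ}

lemma isOpen_setOf_mem_Ioo (hh₁ : Continuous h₁) (hh₂ : Continuous h₂) (hx : Continuous x) :
    IsOpen {t | x t ∈ Ioo (-h₁ t) (h₂ t)} :=
  (isOpen_lt hh₁.neg hx).inter (isOpen_lt hx hh₂)

lemma isClosed_setOf_mem_Ioo_of_abs_logBarrier_le (hh₁ : Continuous h₁) (hh₂ : Continuous h₂)
    (hx : Continuous x) (hM : Continuous M) (hwidth : ∀ t, 0 < h₁ t + h₂ t)
    (hbound : ∀ t, x t ∈ Ioo (-h₁ t) (h₂ t) → |logBarrier (h₁ t) (h₂ t) (x t)| ≤ M t) :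
    IsClosed {t | x t ∈ Ioo (-h₁ t) (h₂ t)} := by
  set A := {t | x t ∈ Ioo (-h₁ t) (h₂ t)}
  refine isClosed_of_closure_subset fun t ht ↦ ?_
  have : (𝓝[A] t).NeBot := mem_closure_iff_nhdsWithin_neBot.1 ht
  have hmem : ∀ᶠ u in 𝓝[A] t, x u ∈ Ioo (-h₁ u) (h₂ u) := eventually_mem_nhdsWithin
  have hx_t : Tendsto x (𝓝[A] t) (𝓝 (x t)) := hx.continuousWithinAt
  have hh₁_t : Tendsto h₁ (𝓝[A] t) (𝓝 (h₁ t)) := hh₁.continuousWithinAt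
  have hh₂_t : Tendsto h₂ (𝓝[A] t) (𝓝 (h₂ t)) := hh₂.continuousWithinAt
  have hfinite : ¬ Tendsto (fun u ↦ |logBarrier (h₁ u) (h₂ u) (x u)|) (𝓝[A] t) atTop := fun h ↦
    not_tendsto_nhds_of_tendsto_atTop (tendsto_atTop_mono' _ (hmem.mono hbound) h) (M t)
      hM.continuousWithinAt
  have hlower : -h₁ t ≤ x t :=
    le_of_tendsto_of_tendsto hh₁_t.neg hx_t (hmem.mono fun _ hu ↦ hu.1.le)
  have hupper : x t ≤ h₂ t :=
    le_of_tendsto_of_tendsto hx_t hh₂_t (hmem.mono fun _ hu ↦ hu.2.le)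
  refine ⟨hlower.lt_of_ne fun heq ↦ hfinite ?_, hupper.lt_of_ne fun heq ↦ hfinite ?_⟩
  · exact tendsto_abs_atBot_atTop.comp
      (tendsto_logBarrier_atBot (hwidth t) hh₁_t hh₂_t (heq ▸ hx_t) (hmem.mono fun _ hu ↦ hu.1))
  · exact tendsto_abs_atTop_atTop.comp
      (tendsto_logBarrier_atTop (hwidth t) hh₁_t hh₂_t (heq ▸ hx_t) (hmem.mono fun _ hu ↦ hu.2))

theorem stmt_16_general {s : Set T} (hs : IsPreconnected s) (hh₁ : ContinuousOn h₁ s)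
    (hh₂ : ContinuousOn h₂ s) (hx : ContinuousOn x s) (hM : ContinuousOn M s)
    (hwidth : ∀ t ∈ s, 0 < h₁ t + h₂ t) {t₀ : T} (ht₀ : t₀ ∈ s)
    (hstart : x t₀ ∈ Ioo (-h₁ t₀) (h₂ t₀))
    (hbound : ∀ t ∈ s, x t ∈ Ioo (-h₁ t) (h₂ t) → |logBarrier (h₁ t) (h₂ t) (x t)| ≤ M t) :
    ∀ t ∈ s, x t ∈ Ioo (-h₁ t) (h₂ t) := by
  have : PreconnectedSpace s := Subtype.preconnectedSpace hs
  rw [continuousOn_iff_continuous_domRestrict] at hh₁ hh₂ hx hM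
  have hclopen : IsClopen {t : s | x t ∈ Ioo (-h₁ t) (h₂ t)} :=
    ⟨isClosed_setOf_mem_Ioo_of_abs_logBarrier_le hh₁ hh₂ hx hM (fun t ↦ hwidth t t.2)
      fun t ↦ hbound t t.2, isOpen_setOf_mem_Ioo hh₁ hh₂ hx⟩
  exact fun t ht ↦ eq_univ_iff_forall.1 (hclopen.eq_univ ⟨⟨t₀, ht₀⟩, hstart⟩) ⟨t, ht⟩

end Invariance

/-- Along a continuous trajectory starting strictly inside the time-varying
constraint interval, boundedness of the transformed variable
`ξ(t) = ((h₁(t)+h₂(t))/4)·log((h₁(t)+x(t))/(h₂(t)-x(t)))` guarantees that the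
constraint `-h₁(t) < x(t) < h₂(t)` is never violated. -/
theorem stmt_16 (h₁ h₂ x : ℝ → ℝ) (M : ℝ) (hM : 0 < M)
    (hch₁ : Continuous h₁) (hch₂ : Continuous h₂) (hcx : Continuous x)
    (hh₁pos : ∀ t : ℝ, 0 ≤ t → 0 < h₁ t) (hh₂pos : ∀ t : ℝ, 0 ≤ t → 0 < h₂ t)
    (h0 : -h₁ 0 < x 0 ∧ x 0 < h₂ 0)
    (hbound : ∀ t : ℝ, 0 ≤ t → (-h₁ t < x t ∧ x t < h₂ t) →
      |((h₁ t + h₂ t) / 4) * Real.log ((h₁ t + x t) / (h₂ t - x t))| ≤ M) :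
    ∀ t : ℝ, 0 ≤ t → -h₁ t < x t ∧ x t < h₂ t :=
  stmt_16_general isPreconnected_Ici hch₁.continuousOn hch₂.continuousOn hcx.continuousOn
    continuousOn_const (fun t ht ↦ add_pos (hh₁pos t ht) (hh₂pos t ht)) self_mem_Ici h0 hbound
end
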